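/- There exist a topological embedding h of the Baire space ℕ → ℕ into ℝ whose range is exactly the set of irrational numbers, and a dense Gδ set G ⊆ ℝ, such that: for every Miller tree T there is a Miller tree T' ⊆ T with the algebraic sum G + h([T']) = {g + y : g ∈ G, y ∈ h([T'])} of Lebesgue measure zero; for every Laver tree T there is a Laver tree T' ⊆ T with G + h([T']) of Lebesgue measure zero; and for every complete Laver tree T there is a complete Laver tree T' ⊆ T with G + h([T']) of Lebesgue measure zero. -/

import Mathlib

open Cardinal Set

/-- A tree on ω: a nonempty set of finite sequences closed under initial segments. -/
def IsTree (T : Set (List ℕ)) : Prop :=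
  T.Nonempty ∧ ∀ s ∈ T, ∀ n : ℕ, s.take n ∈ T

/-- The body of a tree: all infinite branches. -/
def treeBody (T : Set (List ℕ)) : Set (ℕ → ℕ) :=
  {x | ∀ n : ℕ, (List.ofFn fun i : Fin n => x i) ∈ T}

/-- Immediate successors of a node in a tree. -/
def succs (T : Set (List ℕ)) (t : List ℕ) : Set ℕ := {n | t ++ [n] ∈ T}

/-- Sacks (perfect) tree: every node has an extension with at least two immediate successors. -/
def IsSacksTree (T : Set (List ℕ)) : Prop :=
  IsTree T ∧ ∀ s ∈ T, ∃ t ∈ T, s <+: t ∧ (succs T t).Nontrivial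

/-- Miller tree: every node has an extension with infinitely many immediate successors. -/
def IsMillerTree (T : Set (List ℕ)) : Prop :=
  IsTree T ∧ ∀ s ∈ T, ∃ t ∈ T, s <+: t ∧ (succs T t).Infinite

/-- Laver tree: has a stem (a node comparable with every node) such that every node
extending the stem has infinitely many immediate successors. -/
def IsLaverTree (T : Set (List ℕ)) : Prop :=
  IsTree T ∧ ∃ s ∈ T, (∀ t ∈ T, s <+: t ∨ t <+: s) ∧
    ∀ t ∈ T, s <+: t → (succs T t).Infinite

/-- Complete Laver tree: every node has infinitely many immediate successors. -/
def IsCompleteLaverTree (T : Set (List ℕ)) : Prop :=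
  IsTree T ∧ ∀ t ∈ T, (succs T t).Infinite

/-- The tree ideal t₀ associated with a family of trees 𝕋. -/
def treeIdeal (𝕋 : Set (Set (List ℕ))) : Set (Set (ℕ → ℕ)) :=
  {A | ∀ P ∈ 𝕋, ∃ Q ∈ 𝕋, Q ⊆ P ∧ treeBody Q ∩ A = ∅}

/-- t-measurability with respect to a family of trees 𝕋. -/
def TMeasurable (𝕋 : Set (Set (List ℕ))) (A : Set (ℕ → ℕ)) : Prop :=
  ∀ P ∈ 𝕋, ∃ Q ∈ 𝕋, Q ⊆ P ∧ (treeBody Q ⊆ A ∨ treeBody Q ∩ A = ∅)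

/-- 𝕋-Bernstein set: meets and omits the body of every tree in 𝕋. -/
def TBernstein (𝕋 : Set (Set (List ℕ))) (B : Set (ℕ → ℕ)) : Prop :=
  ∀ T ∈ 𝕋, (B ∩ treeBody T).Nonempty ∧ (B \ treeBody T).Nonempty

/-!
Identify `ℕ → ℕ` with the irrationals by sending `x` to an integer encoded by `x 0` plus a
continued fraction with digits `x 1, x 2, …`. As `n → ∞`, the image of the cylinder `[s ⌢ n]`, `s`
nonempty, shrinks to one point, the rational number with finite continued fraction `s`. A fusion
that keeps only sufficiently large successors therefore thins a tree `T` to `T'` of the same kind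
such that every point of `h [T']` lies, for all but finitely many `m`, within `2⁻ᵐ` of one of the
first `m + 1` terms of a fixed sequence. If `G` is the set of points lying in infinitely many
balls of radius `2⁻ʲ` around the terms of a dense sequence, each point of `G + h [T']` lies within
`2 * 2⁻ʲ` of one of `j + 1` points for infinitely many `j`, and Borel–Cantelli applies.
-/

section ContinuedFractions

open Filter Topology BoundedContinuousFunction unitInterval

/-- The `n`-th inverse branch `t ↦ 1 / (n + 1 + t)` of the Gauss map; iterating these branches
produces continued fractions. -/
noncomputable def gaussBranch (n : ℕ) (t : I) : I :=
  ⟨((n : ℝ) + 1 + t)⁻¹, by have := t.2.1; positivity,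
    inv_le_one_of_one_le₀ (by linarith [t.2.1, n.cast_nonneg (α := ℝ)])⟩

lemma coe_gaussBranch (n : ℕ) (t : I) : (gaussBranch n t : ℝ) = ((n : ℝ) + 1 + t)⁻¹ := rfl

lemma continuous_gaussBranch : Continuous fun p : ℕ × I => gaussBranch p.1 p.2 := by
  refine Continuous.subtype_mk (Continuous.inv₀ ?_ fun p => ?_) _
  · have : Continuous fun n : ℕ => (n : ℝ) := continuous_of_discreteTopology
    fun_prop
  · have := p.2.2.1
    positivity

/-- A single branch need not contract (`gaussBranch 0` has slope `-1` at `0`), but two do. -/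
lemma dist_gaussBranch_gaussBranch_le (n m : ℕ) (s t : I) :
    dist (gaussBranch n (gaussBranch m s)) (gaussBranch n (gaussBranch m t)) ≤
      1 / 4 * dist s t := by
  have hn : (0 : ℝ) ≤ n := n.cast_nonneg
  have hm : (0 : ℝ) ≤ m := m.cast_nonneg
  have hs := s.2.1
  have ht := t.2.1
  have two_le (r : I) : 2 ≤ ((n : ℝ) + 1) * (m + 1 + r) + 1 := by
    nlinarith [mul_nonneg hn hm, mul_nonneg hn r.2.1, r.2.1]
  have difference : ((gaussBranch n (gaussBranch m s) : ℝ) - gaussBranch n (gaussBranch m t)) =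
      (s - t) / ((((n : ℝ) + 1) * (m + 1 + s) + 1) * ((n + 1) * (m + 1 + t) + 1)) := by
    simp only [coe_gaussBranch]
    field_simp
    ring
  have four_le : 4 ≤ (((n : ℝ) + 1) * (m + 1 + s) + 1) * ((n + 1) * (m + 1 + t) + 1) := by
    nlinarith [two_le s, two_le t]
  rw [Subtype.dist_eq, Subtype.dist_eq, Real.dist_eq, Real.dist_eq, difference, abs_div,
    abs_of_pos (a := _ * _) (by linarith), one_div_mul_eq_div]
  gcongr

section Expansion

variable {X : Type*} [TopologicalSpace X] (T : C(X, X)) (a : C(X, ℕ))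

/-- The operator whose fixed point sends `x` to the continued fraction with partial quotients
`a x + 1, a (T x) + 1, a (T (T x)) + 1, …`. -/
noncomputable def expansionOperator (D : X →ᵇ I) : X →ᵇ I :=
  mkOfBound
    ⟨fun x => gaussBranch (a x) (D (T x)),
      continuous_gaussBranch.comp (a.continuous.prodMk (D.continuous.comp T.continuous))⟩
    1 fun _ _ => Real.dist_le_of_mem_Icc_01 (Subtype.prop _) (Subtype.prop _)

lemma contractingWith_expansionOperator : ContractingWith (1 / 4) (expansionOperator T a)^[2] := by
  refine ⟨by rw [← NNReal.coe_lt_coe]; norm_num, LipschitzWith.of_dist_le_mul fun D E => ?_⟩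
  refine (dist_le (by positivity)).2 fun x => ?_
  calc dist ((expansionOperator T a)^[2] D x) ((expansionOperator T a)^[2] E x)
      ≤ 1 / 4 * dist (D (T (T x))) (E (T (T x))) := dist_gaussBranch_gaussBranch_le _ _ _ _
    _ ≤ 1 / 4 * dist D E := by gcongr; exact dist_coe_le_dist _
    _ = ((1 / 4 : NNReal) : ℝ) * dist D E := by norm_num

lemma existsUnique_expansion :
    ∃! D : X →ᵇ I, ∀ x, D x = gaussBranch (a x) (D (T x)) := by
  have hC := contractingWith_expansionOperator T a
  have isFixedPt_iff (D : X →ᵇ I) : Function.IsFixedPt (expansionOperator T a) D ↔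
      ∀ x, D x = gaussBranch (a x) (D (T x)) :=
    ⟨fun h x => (DFunLike.congr_fun h x).symm, fun h => DFunLike.ext _ _ fun x => (h x).symm⟩
  exact ⟨_, (isFixedPt_iff _).1 hC.isFixedPt_fixedPoint_iterate,
    fun D hD => hC.fixedPoint_unique (((isFixedPt_iff D).2 hD).iterate 2)⟩

end Expansion

/-- The left shift on the Baire space, dropping the first entry. -/
def baireShift : C(ℕ → ℕ, ℕ → ℕ) := ⟨fun x n => x (n + 1), by fun_prop⟩

/-- The continued fraction `[0; x 0 + 1, x 1 + 1, x 2 + 1, …]`; partial quotients are shifted by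
one because they have to be positive. -/
noncomputable def contFrac : (ℕ → ℕ) →ᵇ I :=
  (existsUnique_expansion baireShift ⟨fun x => x 0, continuous_apply 0⟩).choose

lemma contFrac_eq (x : ℕ → ℕ) : contFrac x = gaussBranch (x 0) (contFrac (baireShift x)) :=
  (existsUnique_expansion baireShift ⟨fun x => x 0, continuous_apply 0⟩).choose_spec.1 x

lemma inv_contFrac (x : ℕ → ℕ) :
    (contFrac x : ℝ)⁻¹ = (x 0 : ℝ) + 1 + contFrac (baireShift x) := by
  rw [contFrac_eq, coe_gaussBranch, inv_inv]

lemma contFrac_pos (x : ℕ → ℕ) : (0 : ℝ) < contFrac x := by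
  rw [← inv_pos, inv_contFrac]
  have := (contFrac (baireShift x)).2.1
  positivity

lemma contFrac_lt_one (x : ℕ → ℕ) : (contFrac x : ℝ) < 1 := by
  rw [← one_lt_inv₀ (contFrac_pos x), inv_contFrac]
  linarith [contFrac_pos (baireShift x), (x 0).cast_nonneg (α := ℝ)]

lemma floor_intCast_add_contFrac (k : ℤ) (x : ℕ → ℕ) : ⌊(k : ℝ) + contFrac x⌋ = k := by
  rw [Int.floor_intCast_add, Int.floor_eq_zero_iff.2 ⟨(contFrac_pos x).le, contFrac_lt_one x⟩,
    add_zero]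

lemma fract_intCast_add_contFrac (k : ℤ) (x : ℕ → ℕ) :
    Int.fract ((k : ℝ) + contFrac x) = contFrac x := by
  rw [Int.fract_intCast_add, Int.fract_eq_self.2 ⟨(contFrac_pos x).le, contFrac_lt_one x⟩]

lemma inv_contFrac_eq_intCast_add (x : ℕ → ℕ) :
    (contFrac x : ℝ)⁻¹ = ((x 0 + 1 : ℤ) : ℝ) + contFrac (baireShift x) := by
  rw [inv_contFrac]
  push_cast
  rfl

/-- The Gauss map strictly decreases the numerators of rationals but never reaches `0` on a
continued fraction, so infinite descent applies. -/
lemma contFrac_ne_ratCast (q : ℚ) (x : ℕ → ℕ) : (contFrac x : ℝ) ≠ q := by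
  induction h : q.num.toNat using Nat.strong_induction_on generalizing q x with
  | _ n ih =>
    intro hq
    have q_pos : 0 < q := by exact_mod_cast hq ▸ contFrac_pos x
    have tail_eq : (contFrac (baireShift x) : ℝ) = (Int.fract q⁻¹ : ℚ) := by
      rw [Rat.cast_fract, Rat.cast_inv, ← hq, inv_contFrac_eq_intCast_add,
        fract_intCast_add_contFrac]
    have num_lt : (Int.fract q⁻¹).num < q.num := Rat.fract_inv_num_lt_num_of_pos q_pos
    have num_pos : 0 < q.num := Rat.num_pos.2 q_pos
    exact ih _ (by omega) _ _ rfl tail_eq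

lemma irrational_contFrac (x : ℕ → ℕ) : Irrational (contFrac x : ℝ) := by
  rintro ⟨q, hq⟩
  exact contFrac_ne_ratCast q x hq.symm

/-- The space of irrational numbers. -/
abbrev IrrationalNumbers : Type := {y : ℝ // Irrational y}

namespace IrrationalNumbers

lemma eventually_floor_eq (y : IrrationalNumbers) :
    ∀ᶠ z : IrrationalNumbers in 𝓝 y, ⌊(z : ℝ)⌋ = ⌊(y : ℝ)⌋ := by
  have floor_lt : (⌊(y : ℝ)⌋ : ℝ) < y := (Int.floor_le _).lt_of_ne (y.2.ne_int _).symm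
  filter_upwards [continuous_subtype_val.tendsto y (Ioo_mem_nhds floor_lt (Int.lt_floor_add_one _))]
    with z hz
  exact Int.floor_eq_iff.2 ⟨hz.1.le, hz.2⟩

lemma continuous_floor : Continuous fun y : IrrationalNumbers => ⌊(y : ℝ)⌋ :=
  continuous_iff_continuousAt.2 fun y =>
    continuousAt_const.congr ((eventually_floor_eq y).mono fun _ h => h.symm)

lemma continuous_fract : Continuous fun y : IrrationalNumbers => Int.fract (y : ℝ) :=
  continuous_subtype_val.sub (continuous_of_discreteTopology.comp continuous_floor)

lemma irrational_fract (y : IrrationalNumbers) : Irrational (Int.fract (y : ℝ)) :=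
  y.2.sub_intCast _

/-- The Gauss map in the coordinate `y = 1 / t`: passing from one complete quotient of a continued
fraction to the next. -/
noncomputable def gaussMap : C(IrrationalNumbers, IrrationalNumbers) :=
  ⟨fun y => ⟨(Int.fract (y : ℝ))⁻¹, (irrational_fract y).inv⟩,
    (continuous_fract.inv₀ fun y => (irrational_fract y).ne_zero).subtype_mk _⟩

lemma coe_gaussMap (y : IrrationalNumbers) : (gaussMap y : ℝ) = (Int.fract (y : ℝ))⁻¹ := rfl

/-- The first partial quotient of the fractional part of `y`, diminished by one. -/
noncomputable def firstDigit : C(IrrationalNumbers, ℕ) :=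
  ⟨fun y => ⌊(gaussMap y : ℝ)⌋.toNat - 1, continuous_of_discreteTopology.comp
    (g := fun k : ℤ => k.toNat - 1) (continuous_floor.comp gaussMap.continuous)⟩

lemma firstDigit_apply (y : IrrationalNumbers) : firstDigit y = ⌊(gaussMap y : ℝ)⌋.toNat - 1 := rfl

lemma firstDigit_add_one (y : IrrationalNumbers) :
    (firstDigit y : ℤ) + 1 = ⌊(gaussMap y : ℝ)⌋ := by
  have one_le : 1 ≤ ⌊(gaussMap y : ℝ)⌋ := by
    rw [Int.le_floor, coe_gaussMap, Int.cast_one]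
    have fract_pos := (Int.fract_nonneg (y : ℝ)).lt_of_ne' (irrational_fract y).ne_zero
    exact (one_le_inv₀ fract_pos).2 (Int.fract_lt_one _).le
  rw [firstDigit_apply]
  omega

/-- The continued fraction digits of the fractional part of `y`. -/
noncomputable def digits : C(IrrationalNumbers, ℕ → ℕ) :=
  ⟨fun y n => firstDigit (gaussMap^[n] y),
    continuous_pi fun n => firstDigit.continuous.comp (gaussMap.continuous.iterate n)⟩

lemma digits_apply (y : IrrationalNumbers) (n : ℕ) : digits y n = firstDigit (gaussMap^[n] y) := rfl

lemma digits_eq_of_fract_eq_contFrac {y : IrrationalNumbers} {x : ℕ → ℕ}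
    (h : Int.fract (y : ℝ) = contFrac x) : digits y = x := by
  funext n
  induction n generalizing x y with
  | zero =>
    have := firstDigit_add_one y
    rw [coe_gaussMap, h, inv_contFrac_eq_intCast_add, floor_intCast_add_contFrac] at this
    rw [digits_apply, Function.iterate_zero_apply]
    omega
  | succ _ ih =>
    refine ih (y := gaussMap y) (x := baireShift x) ?_
    rw [coe_gaussMap, h, inv_contFrac_eq_intCast_add, fract_intCast_add_contFrac]

/-- The fractional part as a bounded continuous function into the unit interval. -/
noncomputable def fractPart : IrrationalNumbers →ᵇ I :=
  mkOfBound ⟨fun y => ⟨Int.fract (y : ℝ), Int.fract_nonneg _, (Int.fract_lt_one _).le⟩,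
    continuous_fract.subtype_mk _⟩ 1
    fun _ _ => Real.dist_le_of_mem_Icc_01 (Subtype.prop _) (Subtype.prop _)

lemma coe_fractPart (y : IrrationalNumbers) : (fractPart y : ℝ) = Int.fract (y : ℝ) := rfl

lemma fractPart_eq (y : IrrationalNumbers) :
    fractPart y = gaussBranch (firstDigit y) (fractPart (gaussMap y)) := by
  have digit_cast : (firstDigit y : ℝ) + 1 = ⌊(gaussMap y : ℝ)⌋ := by
    exact_mod_cast firstDigit_add_one y
  apply Subtype.ext
  rw [coe_gaussBranch, coe_fractPart, coe_fractPart, digit_cast, Int.floor_add_fract, coe_gaussMap,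
    inv_inv]

/-- Both sides solve the functional equation of `existsUnique_expansion` for the Gauss map. -/
lemma contFrac_digits (y : IrrationalNumbers) : (contFrac (digits y) : ℝ) = Int.fract (y : ℝ) := by
  have solutions_eq : contFrac.compContinuous digits = fractPart :=
    (existsUnique_expansion gaussMap firstDigit).unique (fun y => contFrac_eq (digits y))
      fractPart_eq
  rw [← coe_fractPart, ← solutions_eq, compContinuous_apply]

end IrrationalNumbers

open IrrationalNumbers

/-- The identification of the Baire space with the irrational numbers: the first entry encodes the
integer part, the remaining ones the continued fraction digits of the fractional part. -/
noncomputable def baireHomeomorphIrrational : (ℕ → ℕ) ≃ₜ IrrationalNumbers where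
  toFun x := ⟨(Equiv.intEquivNat.symm (x 0) : ℝ) + contFrac (baireShift x),
    (irrational_contFrac _).intCast_add _⟩
  invFun y
    | 0 => Equiv.intEquivNat ⌊(y : ℝ)⌋
    | n + 1 => digits y n
  left_inv x := by
    funext n
    cases n with
    | zero => simp only [floor_intCast_add_contFrac, Equiv.apply_symm_apply]
    | succ n =>
      have digits_eq := digits_eq_of_fract_eq_contFrac
        (y := ⟨_, (irrational_contFrac (baireShift x)).intCast_add (Equiv.intEquivNat.symm (x 0))⟩)
        (fract_intCast_add_contFrac _ _)
      exact congrFun digits_eq n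
  right_inv y := by
    apply Subtype.ext
    change (Equiv.intEquivNat.symm (Equiv.intEquivNat ⌊(y : ℝ)⌋) : ℝ) + contFrac (digits y) = y
    rw [Equiv.symm_apply_apply, contFrac_digits, Int.floor_add_fract]
  continuous_toFun := by
    have integer_part : Continuous fun x : ℕ → ℕ => (Equiv.intEquivNat.symm (x 0) : ℝ) :=
      continuous_of_discreteTopology.comp (g := fun n : ℕ => (Equiv.intEquivNat.symm n : ℝ))
        (continuous_apply 0)
    exact (integer_part.add (continuous_subtype_val.comp
      (contFrac.continuous.comp baireShift.continuous))).subtype_mk _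
  continuous_invFun := continuous_pi fun
    | 0 => continuous_of_discreteTopology.comp continuous_floor
    | n + 1 => (continuous_apply n).comp digits.continuous

/-- The embedding of the Baire space into the real line with image the irrational numbers. -/
noncomputable def baireEmbedding (x : ℕ → ℕ) : ℝ := baireHomeomorphIrrational x

lemma baireEmbedding_apply (x : ℕ → ℕ) :
    baireEmbedding x = (Equiv.intEquivNat.symm (x 0) : ℝ) + contFrac (baireShift x) := rfl

lemma isEmbedding_baireEmbedding : Topology.IsEmbedding baireEmbedding :=
  Topology.IsEmbedding.subtypeVal.comp baireHomeomorphIrrational.isEmbedding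

lemma range_baireEmbedding : Set.range baireEmbedding = {x : ℝ | Irrational x} :=
  (baireHomeomorphIrrational.surjective.range_comp _).trans Subtype.range_coe

end ContinuedFractions

section BranchLimits

open Filter Topology unitInterval

/-- The basic clopen set `[s]` of all sequences having `s` as an initial segment. -/
def cylinder (s : List ℕ) : Set (ℕ → ℕ) := {x | ∃ n, s <+: List.ofFn fun i : Fin n => x i}

lemma cons_mem_cylinder_iff {a : ℕ} {s : List ℕ} {x : ℕ → ℕ} :
    x ∈ cylinder (a :: s) ↔ x 0 = a ∧ baireShift x ∈ cylinder s := by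
  constructor
  · rintro ⟨_ | n, hn⟩
    · simp at hn
    · rw [List.ofFn_succ, List.cons_prefix_cons] at hn
      exact ⟨hn.1.symm, n, hn.2⟩
  · rintro ⟨rfl, n, hn⟩
    refine ⟨n + 1, ?_⟩
    rw [List.ofFn_succ, List.cons_prefix_cons]
    exact ⟨rfl, hn⟩

/-- For every nonempty sequence `s`, the images of the cylinders `[s ⌢ n]` shrink to a single point
as `n → ∞`. The empty sequence is excluded because `baireEmbedding` maps the cylinders `[n]` into
the unit intervals between consecutive integers. -/
def HasBranchLimits {X : Type*} [TopologicalSpace X] (h : (ℕ → ℕ) → X) : Prop :=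
  ∀ s ≠ [], ∃ q, Tendsto (fun n => h '' cylinder (s ++ [n])) atTop (𝓝 q).smallSets

lemma tendsto_gaussBranch_range_smallSets :
    Tendsto (fun n => Set.range (gaussBranch n)) atTop (𝓝 0).smallSets := by
  refine ((tendsto_closedBall_smallSets (0 : I)).comp
    (tendsto_one_div_add_atTop_nhds_zero_nat (𝕜 := ℝ))).smallSets_mono (Eventually.of_forall ?_)
  rintro n _ ⟨t, rfl⟩
  have ht := t.2.1
  rw [Function.comp_apply, Metric.mem_closedBall, Subtype.dist_eq, coe_gaussBranch, Real.dist_eq,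
    Set.Icc.coe_zero, sub_zero, abs_of_nonneg (by positivity), ← one_div]
  exact one_div_le_one_div_of_le (by positivity) (by linarith)

lemma exists_tendsto_contFrac_cylinder (s : List ℕ) :
    ∃ q, Tendsto (fun n => contFrac '' cylinder (s ++ [n])) atTop (𝓝 q).smallSets := by
  induction s with
  | nil =>
    refine ⟨0, tendsto_gaussBranch_range_smallSets.smallSets_mono (Eventually.of_forall ?_)⟩
    rintro n _ ⟨x, hx, rfl⟩
    rw [contFrac_eq, (cons_mem_cylinder_iff.1 hx).1]
    exact Set.mem_range_self _
  | cons a s ih =>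
    obtain ⟨q, hq⟩ := ih
    have branch_tendsto : Tendsto (gaussBranch a) (𝓝 q) (𝓝 (gaussBranch a q)) :=
      (continuous_gaussBranch.comp (Continuous.prodMk_right a)).tendsto q
    refine ⟨gaussBranch a q, ((tendsto_image_smallSets.2 branch_tendsto).comp hq).smallSets_mono
      (Eventually.of_forall ?_)⟩
    rintro n _ ⟨x, hx, rfl⟩
    obtain ⟨head_eq, tail_mem⟩ := cons_mem_cylinder_iff.1 hx
    exact ⟨_, Set.mem_image_of_mem _ tail_mem, by rw [contFrac_eq x, head_eq]⟩

lemma hasBranchLimits_baireEmbedding : HasBranchLimits baireEmbedding := by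
  rintro (_ | ⟨a, s⟩) hs
  · exact absurd rfl hs
  · obtain ⟨q, hq⟩ := exists_tendsto_contFrac_cylinder s
    let translate (t : I) : ℝ := (Equiv.intEquivNat.symm a : ℝ) + t
    have translate_tendsto : Tendsto translate (𝓝 q) (𝓝 (translate q)) :=
      (continuous_const.add continuous_subtype_val).tendsto q
    refine ⟨translate q, ((tendsto_image_smallSets.2 translate_tendsto).comp hq).smallSets_mono
      (Eventually.of_forall ?_)⟩
    rintro n _ ⟨x, hx, rfl⟩
    obtain ⟨head_eq, tail_mem⟩ := cons_mem_cylinder_iff.1 hx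
    exact ⟨_, Set.mem_image_of_mem _ tail_mem, by rw [baireEmbedding_apply, head_eq]⟩

end BranchLimits

section RapidCovers

open Filter Topology MeasureTheory Pointwise

/-- For some sequence of centers `q`, every point of `Y` lies, for all but finitely many `m`, within
`2⁻ᵐ` of one of `q 0, …, q m`. This is the smallness notion for which the sum with `rapidGδ ℝ` is
null. -/
def IsRapidlyCovered {X : Type*} [PseudoMetricSpace X] (Y : Set X) : Prop :=
  ∃ q : ℕ → X, ∀ y ∈ Y, ∀ᶠ m in atTop, ∃ i ≤ m, dist y (q i) ≤ (1 / 2) ^ m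

section RapidGδ

variable (X : Type*) [PseudoMetricSpace X] [TopologicalSpace.SeparableSpace X] [Nonempty X]

/-- A dense sequence repeating each of its terms infinitely often. -/
noncomputable def recurrentDenseSeq (j : ℕ) : X := TopologicalSpace.denseSeq X j.unpair.1

/-- The dense Gδ set of points lying in infinitely many of the balls of radius `2⁻ʲ` around the
terms of `recurrentDenseSeq`. -/
def rapidGδ : Set X := {x | ∃ᶠ j in atTop, dist x (recurrentDenseSeq X j) < (1 / 2) ^ j}

lemma dense_rapidGδ : Dense (rapidGδ X) := by
  refine (TopologicalSpace.denseRange_denseSeq X).mono ?_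
  rintro _ ⟨i, rfl⟩
  refine frequently_atTop.2 fun k => ⟨Nat.pair i k, Nat.right_le_pair i k, ?_⟩
  rw [recurrentDenseSeq, Nat.unpair_pair, dist_self]
  positivity

lemma isGδ_rapidGδ : IsGδ (rapidGδ X) := by
  have eq_iInter : rapidGδ X =
      ⋂ k : ℕ, ⋃ j ≥ k, Metric.ball (recurrentDenseSeq X j) ((1 / 2) ^ j) := by
    ext x
    simp only [rapidGδ, frequently_atTop, Set.mem_ofPred_eq, Set.mem_iInter, Set.mem_iUnion,
      Metric.mem_ball, exists_prop]
  rw [eq_iInter]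
  exact IsGδ.iInter_of_isOpen fun _ => isOpen_biUnion fun _ _ => Metric.isOpen_ball

end RapidGδ

lemma volume_setOf_exists_dist_le_le (p : ℕ → ℝ) (m : ℕ) (r : ℝ) :
    volume {z | ∃ i ≤ m, dist z (p i) ≤ r} ≤ ENNReal.ofReal ((m + 1) * (2 * r)) := by
  have eq_biUnion : {z | ∃ i ≤ m, dist z (p i) ≤ r} =
      ⋃ i ∈ Finset.range (m + 1), Metric.closedBall (p i) r := by
    ext z
    simp only [Set.mem_ofPred_eq, Set.mem_iUnion, Finset.mem_range, Nat.lt_succ_iff,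
      Metric.mem_closedBall, exists_prop]
  calc volume {z | ∃ i ≤ m, dist z (p i) ≤ r}
      ≤ ∑ i ∈ Finset.range (m + 1), volume (Metric.closedBall (p i) r) :=
        eq_biUnion ▸ measure_biUnion_finset_le _ _
    _ = ENNReal.ofReal ((m + 1) * (2 * r)) := by
        simp only [Real.volume_closedBall, Finset.sum_const, Finset.card_range, nsmul_eq_mul]
        rw [← ENNReal.ofReal_natCast, ← ENNReal.ofReal_mul (by positivity), Nat.cast_succ]

lemma summable_succ_mul_geometric :
    Summable fun m : ℕ => ((m : ℝ) + 1) * (2 * (2 * (1 / 2) ^ m)) := by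
  have half_lt : ‖(1 / 2 : ℝ)‖ < 1 := by norm_num
  refine (((summable_pow_mul_geometric_of_norm_lt_one 1 half_lt).add
    (summable_geometric_of_norm_lt_one half_lt)).mul_left 4).congr fun m => ?_
  ring

/-- A Borel–Cantelli argument: a sum `g + y` lies within `2 * 2⁻ʲ` of one of the `j + 1` points
`recurrentDenseSeq ℝ j + q i`, `i ≤ j`, for infinitely many `j`. -/
theorem IsRapidlyCovered.volume_rapidGδ_add_eq_zero {Y : Set ℝ} (hY : IsRapidlyCovered Y) :
    volume (rapidGδ ℝ + Y) = 0 := by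
  obtain ⟨q, hq⟩ := hY
  let near (j : ℕ) (z : ℝ) : Prop :=
    ∃ i ≤ j, dist z (recurrentDenseSeq ℝ j + q i) ≤ 2 * (1 / 2) ^ j
  have frequently_near_null : volume {z | ∃ᶠ j in atTop, near j z} = 0 := by
    refine measure_setOfPred_frequently_eq_zero (ne_top_of_le_ne_top
      summable_succ_mul_geometric.tsum_ofReal_ne_top (ENNReal.tsum_le_tsum fun j => ?_))
    exact volume_setOf_exists_dist_le_le _ _ _
  refine measure_mono_null ?_ frequently_near_null
  rintro _ ⟨g, hg, y, hy, rfl⟩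
  refine (hg.and_eventually (hq y hy)).mono fun j ⟨hgj, i, hij, hyi⟩ => ⟨i, hij, ?_⟩
  linarith [dist_add_add_le g y (recurrentDenseSeq ℝ j) (q i), hgj, hyi]

end RapidCovers

section Fusion

open Filter Topology Encodable

lemma IsTree.mem_of_prefix {T : Set (List ℕ)} (hT : IsTree T) {s t : List ℕ} (ht : t ∈ T)
    (hst : s <+: t) : s ∈ T := by
  rw [List.prefix_iff_eq_take.1 hst]
  exact hT.2 t ht _

/-- The tree generated by a set of nodes. -/
def prefixClosure (N : Set (List ℕ)) : Set (List ℕ) := {s | ∃ t ∈ N, s <+: t}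

lemma subset_prefixClosure (N : Set (List ℕ)) : N ⊆ prefixClosure N :=
  fun t ht => ⟨t, ht, List.prefix_rfl⟩

lemma isTree_prefixClosure {N : Set (List ℕ)} (hN : N.Nonempty) : IsTree (prefixClosure N) :=
  ⟨hN.mono (subset_prefixClosure N),
    fun _ ⟨t, ht, hst⟩ n => ⟨t, ht, (List.take_prefix n _).trans hst⟩⟩

lemma IsTree.prefixClosure_subset {T N : Set (List ℕ)} (hT : IsTree T) (hN : N ⊆ T) :
    prefixClosure N ⊆ T :=
  fun _ ⟨_, ht, hst⟩ => hT.mem_of_prefix (hN ht) hst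

/-- The scheme of nodes of a fusion, started at `t₀`: the node with address `k :: r` is the
extension `e t n` of its parent `t`, the node with address `r`, through the `n`-th successor of
`t`, where `n = c t m` depends on the code `m` of the new address. Addresses list the most recent
choice first. -/
def fusionNode (e : List ℕ → ℕ → List ℕ) (c : List ℕ → ℕ → ℕ) (t₀ : List ℕ) : List ℕ → List ℕ
  | [] => t₀
  | k :: r => e (fusionNode e c t₀ r) (c (fusionNode e c t₀ r) (encode (k :: r)))

section FusionNode

variable {e : List ℕ → ℕ → List ℕ} {c : List ℕ → ℕ → ℕ} {t₀ : List ℕ}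

lemma fusionNode_mem {N : Set (List ℕ)} (ht₀ : t₀ ∈ N) (hc : ∀ t ∈ N, ∀ m, e t (c t m) ∈ N)
    (r : List ℕ) : fusionNode e c t₀ r ∈ N := by
  induction r with
  | nil => exact ht₀
  | cons k r ih => exact hc _ ih _

lemma infinite_setOf_mem_range_fusionNode {r : List ℕ}
    (hc : ∀ m, m < c (fusionNode e c t₀ r) m) :
    {n | e (fusionNode e c t₀ r) n ∈ Set.range (fusionNode e c t₀)}.Infinite := by
  refine Set.infinite_of_forall_exists_gt fun k => ⟨_, ⟨k :: r, rfl⟩, ?_⟩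
  calc k ≤ Nat.pair k (encode r) := Nat.left_le_pair _ _
    _ < encode (k :: r) := Nat.lt_succ_self _
    _ < c (fusionNode e c t₀ r) (encode (k :: r)) := hc _

/-- Walking down from a node whose address has a large code, look at the first step that
leads to an ancestor whose address has a small code. -/
lemma exists_encode_le_lt_encode_cons (he : ∀ t n, t ++ [n] <+: e t n) {m : ℕ} {r : List ℕ}
    (hr : m < encode r) : ∃ p k, encode p ≤ m ∧ m < encode (k :: p) ∧
      fusionNode e c t₀ p ++ [c (fusionNode e c t₀ p) (encode (k :: p))] <+:
        fusionNode e c t₀ r := by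
  induction r with
  | nil => simp at hr
  | cons k r ih =>
    by_cases hrm : encode r ≤ m
    · exact ⟨r, k, hrm, hr, he _ _⟩
    · obtain ⟨p, l, hpm, hml, hpr⟩ := ih (not_le.1 hrm)
      exact ⟨p, l, hpm, hml, hpr.trans ((List.prefix_append _ _).trans (he _ _))⟩

lemma exists_mem_cylinder_of_mem_treeBody (he : ∀ t n, t ++ [n] <+: e t n) {x : ℕ → ℕ}
    (hx : x ∈ treeBody (prefixClosure (Set.range (fusionNode e c t₀)))) (m : ℕ) :
    ∃ p k, encode p ≤ m ∧ m < encode (k :: p) ∧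
      x ∈ cylinder (fusionNode e c t₀ p ++ [c (fusionNode e c t₀ p) (encode (k :: p))]) := by
  have small_addresses_finite : {r : List ℕ | encode r ≤ m}.Finite :=
    (Set.finite_Iic m).preimage encode_injective.injOn
  obtain ⟨L, hL⟩ := (small_addresses_finite.image
    fun r => (fusionNode e c t₀ r).length).bddAbove
  have length_le {r : List ℕ} (hr : encode r ≤ m) : (fusionNode e c t₀ r).length ≤ L :=
    hL (Set.mem_image_of_mem _ hr)
  obtain ⟨_, ⟨r, rfl⟩, hxr⟩ := hx (L + 1)
  have lt_encode : m < encode r := by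
    by_contra! hr
    have := hxr.length_le
    rw [List.length_ofFn] at this
    have := length_le hr
    omega
  obtain ⟨p, k, hpm, hmk, hpr⟩ := exists_encode_le_lt_encode_cons he lt_encode
  refine ⟨p, k, hpm, hmk, L + 1, List.prefix_of_prefix_length_le hpr hxr ?_⟩
  rw [List.length_append, List.length_singleton, List.length_ofFn]
  exact Nat.succ_le_succ (length_le hpm)

lemma mem_range_fusionNode_of_prefix {r s : List ℕ} (ht₀s : t₀ <+: s)
    (hsr : s <+: fusionNode (fun t n => t ++ [n]) c t₀ r) :
    s ∈ Set.range (fusionNode (fun t n => t ++ [n]) c t₀) := by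
  induction r with
  | nil => exact ⟨[], ht₀s.eq_of_length_le hsr.length_le⟩
  | cons k r ih =>
    rcases List.prefix_concat_iff.1 hsr with rfl | hsr
    · exact ⟨k :: r, rfl⟩
    · exact ih hsr

end FusionNode

variable {X : Type*} [PseudoMetricSpace X] {h : (ℕ → ℕ) → X}

lemma isRapidlyCovered_image_treeBody_fusion {e : List ℕ → ℕ → List ℕ} {c : List ℕ → ℕ → ℕ}
    {t₀ : List ℕ} (he : ∀ t n, t ++ [n] <+: e t n) (q : List ℕ → X)
    (hc : ∀ r m, m < c (fusionNode e c t₀ r) m)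
    (hq : ∀ r m, fusionNode e c t₀ r ≠ [] →
      ∀ x ∈ cylinder (fusionNode e c t₀ r ++ [c (fusionNode e c t₀ r) m]),
        dist (h x) (q (fusionNode e c t₀ r)) ≤ (1 / 2) ^ m) :
    IsRapidlyCovered (h '' treeBody (prefixClosure (Set.range (fusionNode e c t₀)))) := by
  refine ⟨fun i => q (fusionNode e c t₀ (Denumerable.ofNat (List ℕ) i)), ?_⟩
  rintro _ ⟨x, hx, rfl⟩
  filter_upwards [eventually_ge_atTop (x 0)] with m hm
  obtain ⟨p, k, hpm, hmk, hxp⟩ := exists_mem_cylinder_of_mem_treeBody he hx m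
  have ne_nil : fusionNode e c t₀ p ≠ [] := by
    intro hnil
    have := hc p (encode (k :: p))
    rw [hnil] at this hxp
    have := (cons_mem_cylinder_iff.1 hxp).1
    omega
  refine ⟨encode p, hpm, ?_⟩
  rw [Denumerable.ofNat_encode]
  exact (hq p _ ne_nil x hxp).trans
    (pow_le_pow_of_le_one (by norm_num) (by norm_num) hmk.le)

lemma HasBranchLimits.exists_successor_dist_le (hh : HasBranchLimits h) : ∃ q : List ℕ → X,
    ∀ (t : List ℕ) (A : Set ℕ), A.Infinite → ∀ m : ℕ, ∃ n ∈ A, m < n ∧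
      (t ≠ [] → ∀ x ∈ cylinder (t ++ [n]), dist (h x) (q t) ≤ (1 / 2) ^ m) := by
  have limit_point (t : List ℕ) : ∃ q, t ≠ [] →
      Tendsto (fun n => h '' cylinder (t ++ [n])) atTop (𝓝 q).smallSets := by
    by_cases ht : t = []
    · exact ⟨h 0, fun hne => absurd ht hne⟩
    · exact (hh t ht).imp fun _ hq _ => hq
  choose q hq using limit_point
  refine ⟨q, fun t A hA m => ?_⟩
  have eventually_close : ∀ᶠ n in atTop, t ≠ [] → ∀ x ∈ cylinder (t ++ [n]),
      dist (h x) (q t) ≤ (1 / 2) ^ m := by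
    rw [eventually_imp_distrib_left]
    intro ht
    filter_upwards [tendsto_smallSets_iff.1 (hq t ht) _
      (Metric.closedBall_mem_nhds (q t) (show (0 : ℝ) < (1 / 2) ^ m by positivity))] with n hn x hx
    exact hn (Set.mem_image_of_mem h hx)
  obtain ⟨n, hnA, hmn, hn⟩ := ((Nat.frequently_atTop_iff_infinite.2 hA).and_eventually
    ((eventually_gt_atTop m).and eventually_close)).exists
  exact ⟨n, hnA, hmn, hn⟩

theorem HasBranchLimits.exists_fusion (hh : HasBranchLimits h) {e : List ℕ → ℕ → List ℕ}
    (he : ∀ t n, t ++ [n] <+: e t n) {N : Set (List ℕ)} (hN : ∀ t ∈ N, {n | e t n ∈ N}.Infinite)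
    {t₀ : List ℕ} (ht₀ : t₀ ∈ N) :
    ∃ c, Set.range (fusionNode e c t₀) ⊆ N ∧
      (∀ t ∈ Set.range (fusionNode e c t₀), {n | e t n ∈ Set.range (fusionNode e c t₀)}.Infinite) ∧
      IsRapidlyCovered (h '' treeBody (prefixClosure (Set.range (fusionNode e c t₀)))) := by
  obtain ⟨q, hq⟩ := hh.exists_successor_dist_le
  have choice (t : List ℕ) (m : ℕ) : ∃ n, t ∈ N → e t n ∈ N ∧ m < n ∧
      (t ≠ [] → ∀ x ∈ cylinder (t ++ [n]), dist (h x) (q t) ≤ (1 / 2) ^ m) := by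
    by_cases ht : t ∈ N
    · exact (hq t _ (hN t ht) m).imp fun _ hn _ => hn
    · exact ⟨0, fun h => absurd h ht⟩
  choose c hc using choice
  have node_mem (r : List ℕ) : fusionNode e c t₀ r ∈ N :=
    fusionNode_mem ht₀ (fun t ht m => (hc t m ht).1) r
  refine ⟨c, Set.range_subset_iff.2 node_mem, ?_, ?_⟩
  · rintro _ ⟨r, rfl⟩
    exact infinite_setOf_mem_range_fusionNode fun m => (hc _ m (node_mem r)).2.1
  · exact isRapidlyCovered_image_treeBody_fusion he q (fun r m => (hc _ m (node_mem r)).2.1)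
      fun r m => (hc _ m (node_mem r)).2.2

lemma IsMillerTree.exists_isRapidlyCovered (hh : HasBranchLimits h) {T : Set (List ℕ)}
    (hT : IsMillerTree T) :
    ∃ T' ⊆ T, IsMillerTree T' ∧ IsRapidlyCovered (h '' treeBody T') := by
  obtain ⟨hT, hsplit⟩ := hT
  let N : Set (List ℕ) := {t | t ∈ T ∧ (succs T t).Infinite}
  have splitting_extension (s : List ℕ) : ∃ t, s <+: t ∧ (s ∈ T → t ∈ N) := by
    by_cases hs : s ∈ T
    · obtain ⟨t, ht, hst, hinf⟩ := hsplit s hs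
      exact ⟨t, hst, fun _ => ⟨ht, hinf⟩⟩
    · exact ⟨s, List.prefix_rfl, fun h => absurd h hs⟩
  choose E prefix_E E_mem using splitting_extension
  obtain ⟨s₀, hs₀⟩ := hT.1
  obtain ⟨c, hcN, hinf, hcov⟩ := hh.exists_fusion (e := fun t n => E (t ++ [n]))
    (fun t n => prefix_E _) (fun t ht => ht.2.mono fun n hn => E_mem _ hn) (E_mem s₀ hs₀)
  refine ⟨_, hT.prefixClosure_subset fun t ht => (hcN ht).1,
    ⟨isTree_prefixClosure (Set.range_nonempty _), ?_⟩, hcov⟩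
  rintro s ⟨t, ht, hst⟩
  exact ⟨t, subset_prefixClosure _ ht, hst, (hinf t ht).mono fun n hn => ⟨_, hn, prefix_E _⟩⟩

/-- A Laver tree with a specified stem `s`. Laver trees are the case of an arbitrary stem, complete
Laver trees the case of the empty one. -/
def IsLaverTreeWithStem (T : Set (List ℕ)) (s : List ℕ) : Prop :=
  IsTree T ∧ s ∈ T ∧ (∀ t ∈ T, s <+: t ∨ t <+: s) ∧ ∀ t ∈ T, s <+: t → (succs T t).Infinite

lemma isLaverTree_iff_exists_stem {T : Set (List ℕ)} :
    IsLaverTree T ↔ ∃ s, IsLaverTreeWithStem T s :=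
  exists_and_left.symm

lemma isCompleteLaverTree_iff_stem_nil {T : Set (List ℕ)} :
    IsCompleteLaverTree T ↔ IsLaverTreeWithStem T [] :=
  ⟨fun ⟨hT, hinf⟩ => ⟨hT, hT.mem_of_prefix hT.1.some_mem List.nil_prefix,
    fun _ _ => .inl List.nil_prefix, fun t ht _ => hinf t ht⟩,
    fun ⟨hT, _, _, hinf⟩ => ⟨hT, fun t ht => hinf t ht List.nil_prefix⟩⟩

lemma IsLaverTreeWithStem.exists_isRapidlyCovered (hh : HasBranchLimits h) {T : Set (List ℕ)}
    {s : List ℕ} (hT : IsLaverTreeWithStem T s) :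
    ∃ T' ⊆ T, IsLaverTreeWithStem T' s ∧ IsRapidlyCovered (h '' treeBody T') := by
  obtain ⟨hT, hs, -, hsplit⟩ := hT
  let N : Set (List ℕ) := {t | t ∈ T ∧ s <+: t}
  have hN : ∀ t ∈ N, {n | t ++ [n] ∈ N}.Infinite := fun t ht => (hsplit t ht.1 ht.2).mono
    fun n hn => ⟨hn, ht.2.trans (List.prefix_append _ _)⟩
  obtain ⟨c, hcN, hinf, hcov⟩ :=
    hh.exists_fusion (fun _ _ => List.prefix_rfl) hN ⟨hs, List.prefix_rfl⟩
  refine ⟨_, hT.prefixClosure_subset fun t ht => (hcN ht).1,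
    ⟨isTree_prefixClosure (Set.range_nonempty _), ⟨s, ⟨[], rfl⟩, List.prefix_rfl⟩, ?_, ?_⟩, hcov⟩
  · rintro u ⟨t, ht, hut⟩
    exact List.prefix_or_prefix_of_prefix (hcN ht).2 hut
  · rintro u ⟨_, ⟨r, rfl⟩, hur⟩ hsu
    exact (hinf u (mem_range_fusionNode_of_prefix hsu hur)).mono
      fun n hn => subset_prefixClosure _ hn

lemma IsLaverTree.exists_isRapidlyCovered (hh : HasBranchLimits h) {T : Set (List ℕ)}
    (hT : IsLaverTree T) :
    ∃ T' ⊆ T, IsLaverTree T' ∧ IsRapidlyCovered (h '' treeBody T') := by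
  obtain ⟨s, hs⟩ := isLaverTree_iff_exists_stem.1 hT
  obtain ⟨T', hT'T, hT', hcov⟩ := hs.exists_isRapidlyCovered hh
  exact ⟨T', hT'T, isLaverTree_iff_exists_stem.2 ⟨s, hT'⟩, hcov⟩

lemma IsCompleteLaverTree.exists_isRapidlyCovered (hh : HasBranchLimits h) {T : Set (List ℕ)}
    (hT : IsCompleteLaverTree T) :
    ∃ T' ⊆ T, IsCompleteLaverTree T' ∧ IsRapidlyCovered (h '' treeBody T') := by
  simp only [isCompleteLaverTree_iff_stem_nil] at hT ⊢
  exact hT.exists_isRapidlyCovered hh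

end Fusion

open MeasureTheory Pointwise in
/-- there is an embedding of Baire space onto the irrationals and a dense
Gδ set G such that each Miller (Laver, complete Laver) tree has a Miller (Laver,
complete Laver) subtree T' with G + h([T']) Lebesgue null. -/
theorem stmt14 :
    ∃ h : (ℕ → ℕ) → ℝ, Topology.IsEmbedding h ∧ Set.range h = {x : ℝ | Irrational x} ∧
      ∃ G : Set ℝ, Dense G ∧ IsGδ G ∧
        (∀ T, IsMillerTree T →
          ∃ T' ⊆ T, IsMillerTree T' ∧ volume (G + h '' treeBody T') = 0) ∧
        (∀ T, IsLaverTree T →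
          ∃ T' ⊆ T, IsLaverTree T' ∧ volume (G + h '' treeBody T') = 0) ∧
        (∀ T, IsCompleteLaverTree T →
          ∃ T' ⊆ T, IsCompleteLaverTree T' ∧ volume (G + h '' treeBody T') = 0) := by
  refine ⟨baireEmbedding, isEmbedding_baireEmbedding, range_baireEmbedding, rapidGδ ℝ,
    dense_rapidGδ ℝ, isGδ_rapidGδ ℝ, fun T hT => ?_, fun T hT => ?_, fun T hT => ?_⟩
  all_goals
    obtain ⟨T', hT'T, hT', hcov⟩ := hT.exists_isRapidlyCovered hasBranchLimits_baireEmbedding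
    exact ⟨T', hT'T, hT', hcov.volume_rapidGδ_add_eq_zero⟩
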